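/- Let k ≥ 5 be an integer and let T_k = (V, root, par) be a rooted directed tree in which card(Chi(root)) = k and every vertex other than root has exactly one child. Then the bounded Cesàro operator C_{T_k} on ℓ²(V) satisfies ‖C_{T_k}‖ > 2, while its spectral radius equals 2; in particular C_{T_k} is not normaloid (its norm strictly exceeds its spectral radius). -/

import Mathlib

noncomputable section

open scoped ENNReal

/-- A rooted directed tree encoded by a vertex set `V`, a root, and a parent map. -/
structure TreeData (V : Type) where
  root : V
  par : V → V
  par_root : par root = root
  hroot : ∀ v : V, ∃ n : ℕ, par^[n] v = root

namespace TreeData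

variable {V : Type}

open scoped Classical in
/-- The depth of a vertex: the least `n` with `par^[n] v = root`. -/
def dep (T : TreeData V) (v : V) : ℕ := Nat.find (T.hroot v)

/-- The Cesàro map `Λ_T`. -/
def cesaro (T : TreeData V) (f : V → ℂ) : V → ℂ := fun v =>
  ((T.dep v : ℂ) + 1)⁻¹ * ∑ j ∈ Finset.range (T.dep v + 1), f (T.par^[j] v)

/-- The `n`-th level `Chi^⟨n⟩(root)`: vertices of depth `n`. -/
def level (T : TreeData V) (n : ℕ) : Set V := {v : V | T.dep v = n}

/-- The set of children of a vertex. -/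
def chi (T : TreeData V) (u : V) : Set V := {v : V | v ≠ T.root ∧ T.par v = u}

end TreeData

/-- The Hilbert space `ℓ²(V)` of square-summable complex functions on `V`. -/
abbrev L2 (V : Type) : Type := lp (fun _ : V => ℂ) 2

/-!
Write `M = Λ f`. Then `(dep v + 1) M v = dep v * M (par v) + f v`, and everything follows from this
recursion.

* Upper bound on the spectrum: if `f root = 0`, completing the square in the recursion and summing
  over the tree gives Hardy's inequality `‖C f‖ ≤ 2 ‖f‖`, because below the root no two vertices
  share a parent. As `C f - f` always vanishes at the root, a spectral value other than `1` has
  modulus at most `2`.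
* `2` is a spectral value: if `(2 - C) f` is the indicator of the root, the recursion becomes
  `(2 dep v + 1) M v = 2 dep v * M (par v)`, which forces `‖M v‖² ≥ 1 / (2 dep v + 1)`; as every
  level contains a vertex, `M` is not square-summable.
* Norm: the image of the indicator of the root is `v ↦ 1 / (dep v + 1)`, whose squared norm is at
  least `1 + k (π² / 6 - 1)`, and this exceeds `4` as soon as `k ≥ 5`.
-/

section InnerProductSpace

variable {E : Type*} [NormedAddCommGroup E] [InnerProductSpace ℝ E]

/- The right side minus the left is
`‖x - 2 • ((t + 1) • x - t • y)‖ ^ 2 + 2 * t * ‖x - y‖ ^ 2`. -/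
lemma norm_sq_add_le_four_mul_norm_smul_sub_smul_sq {t : ℝ} (ht : 0 ≤ t) (x y : E) :
    ‖x‖ ^ 2 + 2 * ((t + 1) * ‖x‖ ^ 2) ≤
      2 * (t * ‖y‖ ^ 2) + 4 * ‖(t + 1) • x - t • y‖ ^ 2 := by
  have hsquare : 0 ≤ ‖x - (2 : ℝ) • ((t + 1) • x - t • y)‖ ^ 2 := sq_nonneg _
  have hdiff : 0 ≤ 2 * t * ‖x - y‖ ^ 2 := by positivity
  simp only [← real_inner_self_eq_norm_sq, inner_sub_left, inner_sub_right, inner_smul_left,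
    inner_smul_right, conj_trivial, real_inner_comm x y] at hsquare hdiff ⊢
  linarith

end InnerProductSpace

section Spectrum

variable {𝕜 : Type*} [NormedField 𝕜]

lemma norm_le_of_mem_spectrum_of_norm_pow_mul_sub_le {A : Type*} [NormedRing A]
    [NormedAlgebra 𝕜 A] [CompleteSpace A] {a : A} {c z : 𝕜} {r K : ℝ} (hr : 0 ≤ r)
    (h : ∀ n : ℕ, ‖a ^ n * (a - algebraMap 𝕜 A c)‖ ≤ r ^ n * K)
    (hz : z ∈ spectrum 𝕜 a) (hzc : z ≠ c) : ‖z‖ ≤ r := by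
  open Polynomial in
  have hpow (n : ℕ) : ‖z‖ ^ n * ‖z - c‖ ≤ r ^ n * K * ‖(1 : A)‖ := by
    have hmem := spectrum.subset_polynomial_aeval a (X ^ n * (X - C c)) ⟨z, hz, rfl⟩
    simp only [eval_mul, eval_pow, eval_X, eval_sub, eval_C, map_mul, map_pow, aeval_X, map_sub,
      aeval_C] at hmem
    calc ‖z‖ ^ n * ‖z - c‖ = ‖z ^ n * (z - c)‖ := by rw [norm_mul, norm_pow]
      _ ≤ ‖a ^ n * (a - algebraMap 𝕜 A c)‖ * ‖(1 : A)‖ := spectrum.norm_le_norm_mul_of_mem hmem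
      _ ≤ r ^ n * K * ‖(1 : A)‖ := by gcongr; exact h n
  by_contra! hlt
  have hz0 : 0 < ‖z‖ := hr.trans_lt hlt
  have hratio (n : ℕ) : ‖z - c‖ ≤ (r / ‖z‖) ^ n * (K * ‖(1 : A)‖) := by
    rw [div_pow, div_mul_eq_mul_div, le_div_iff₀ (by positivity), mul_comm, ← mul_assoc]
    exact hpow n
  have hlim := (tendsto_pow_atTop_nhds_zero_of_lt_one (by positivity)
    ((div_lt_one hz0).2 hlt)).mul_const (K * ‖(1 : A)‖)
  have hle : ‖z - c‖ ≤ 0 := by simpa using ge_of_tendsto' hlim hratio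
  exact hzc (sub_eq_zero.1 (norm_le_zero_iff.1 hle))

end Spectrum

section Operator

variable {𝕜 E : Type*} [NontriviallyNormedField 𝕜] [NormedAddCommGroup E] [NormedSpace 𝕜 E]
  [CompleteSpace E]

lemma norm_le_of_mem_spectrum_of_norm_apply_le_on {A : E →L[𝕜] E} {s : Set E} {c z : 𝕜} {r : ℝ}
    (hr : 0 ≤ r) (hmaps : Set.MapsTo A s s) (hbound : ∀ x ∈ s, ‖A x‖ ≤ r * ‖x‖)
    (hrange : ∀ x, A x - c • x ∈ s) (hz : z ∈ spectrum 𝕜 A) (hzc : z ≠ c) : ‖z‖ ≤ r := by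
  have hpow (n : ℕ) {x : E} (hx : x ∈ s) : ‖(A ^ n) x‖ ≤ r ^ n * ‖x‖ := by
    induction n generalizing x with
    | zero => simp
    | succ n ih =>
      calc ‖(A ^ (n + 1)) x‖ = ‖(A ^ n) (A x)‖ := by rw [pow_succ]; rfl
        _ ≤ r ^ n * ‖A x‖ := ih (hmaps hx)
        _ ≤ r ^ n * (r * ‖x‖) := by gcongr; exact hbound x hx
        _ = r ^ (n + 1) * ‖x‖ := by ring
  refine norm_le_of_mem_spectrum_of_norm_pow_mul_sub_le hr
    (K := ‖A - algebraMap 𝕜 (E →L[𝕜] E) c‖) (fun n ↦ ?_) hz hzc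
  refine ContinuousLinearMap.opNorm_le_bound _ (by positivity) fun x ↦ ?_
  calc ‖(A ^ n) (A x - c • x)‖ ≤ r ^ n * ‖A x - c • x‖ := hpow n (hrange x)
    _ ≤ r ^ n * (‖A - algebraMap 𝕜 (E →L[𝕜] E) c‖ * ‖x‖) := by
      gcongr
      exact (A - algebraMap 𝕜 (E →L[𝕜] E) c).le_opNorm x
    _ = r ^ n * ‖A - algebraMap 𝕜 (E →L[𝕜] E) c‖ * ‖x‖ := by ring

end Operator

namespace L2

variable {V : Type}

lemma sum_norm_sq_le_norm_sq (f : L2 V) (s : Finset V) : ∑ v ∈ s, ‖f v‖ ^ 2 ≤ ‖f‖ ^ 2 := by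
  simpa using lp.sum_rpow_le_norm_rpow (p := 2) (by simp) f s

lemma norm_le_of_forall_sum_norm_sq_le {f : L2 V} {K : ℝ} (hK : 0 ≤ K)
    (h : ∀ s : Finset V, ∑ v ∈ s, ‖f v‖ ^ 2 ≤ K ^ 2) : ‖f‖ ≤ K :=
  lp.norm_le_of_forall_sum_le (p := 2) (by simp) hK fun s ↦ by simpa using h s

end L2

namespace TreeData

variable {V : Type} {T : TreeData V}

section Depth

lemma dep_eq_zero_iff {v : V} : T.dep v = 0 ↔ v = T.root := by
  classical
  exact Nat.find_eq_zero (T.hroot v)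

@[simp]
lemma dep_root : T.dep T.root = 0 := dep_eq_zero_iff.2 rfl

lemma par_iterate_dep (v : V) : T.par^[T.dep v] v = T.root := by
  classical
  exact Nat.find_spec (T.hroot v)

lemma dep_eq_dep_par_add_one {v : V} (hv : v ≠ T.root) : T.dep v = T.dep (T.par v) + 1 := by
  classical
  exact Nat.find_comp_succ (T.hroot v) (T.hroot (T.par v)) hv

lemma ne_root_of_dep_eq_add_one {v : V} {n : ℕ} (h : T.dep v = n + 1) : v ≠ T.root :=
  fun hroot ↦ n.succ_ne_zero (h.symm.trans (dep_eq_zero_iff.2 hroot))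

lemma dep_par_of_dep_eq_add_one {v : V} {n : ℕ} (h : T.dep v = n + 1) : T.dep (T.par v) = n :=
  Nat.succ_injective ((dep_eq_dep_par_add_one (ne_root_of_dep_eq_add_one h)).symm.trans h)

lemma exists_finset_superset_par_closed (T : TreeData V) (s : Finset V) :
    ∃ t, s ⊆ t ∧ ∀ v ∈ t, T.par v ∈ t := by
  classical
  refine ⟨s.biUnion fun v ↦ (Finset.range (T.dep v + 1)).image fun j ↦ T.par^[j] v,
    fun v hv ↦ ?_, fun w hw ↦ ?_⟩
  · simp only [Finset.mem_biUnion, Finset.mem_image, Finset.mem_range]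
    exact ⟨v, hv, 0, by omega, rfl⟩
  · simp only [Finset.mem_biUnion, Finset.mem_image, Finset.mem_range] at hw ⊢
    obtain ⟨v, hv, j, hj, rfl⟩ := hw
    refine ⟨v, hv, ?_⟩
    rcases (Nat.lt_succ_iff.1 hj).lt_or_eq with hlt | rfl
    · exact ⟨j + 1, by omega, Function.iterate_succ_apply' ..⟩
    · exact ⟨T.dep v, hj, by rw [par_iterate_dep, T.par_root]⟩

end Depth

section Level

lemma level_zero : T.level 0 = {T.root} := Set.ext fun _ ↦ dep_eq_zero_iff

lemma level_one : T.level 1 = T.chi T.root := by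
  ext v
  rcases eq_or_ne v T.root with rfl | hv
  · simp [level, chi]
  · simp [level, chi, hv, dep_eq_dep_par_add_one hv, dep_eq_zero_iff]

lemma level_subset_image_par_level_succ {n : ℕ} (h : ∀ v ∈ T.level n, (T.chi v).Nonempty) :
    T.level n ⊆ T.par '' T.level (n + 1) := by
  intro v hv
  obtain ⟨w, hw, rfl⟩ := h v hv
  exact ⟨w, (dep_eq_dep_par_add_one hw).trans (congrArg (· + 1) hv), rfl⟩

lemma level_nonempty (h : ∀ v, (T.chi v).Nonempty) (n : ℕ) : (T.level n).Nonempty := by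
  induction n with
  | zero => simp [level_zero]
  | succ n ih => exact (ih.mono (level_subset_image_par_level_succ fun v _ ↦ h v)).of_image

lemma encard_chi_root_le_encard_level (h : ∀ v, v ≠ T.root → (T.chi v).Nonempty) (n : ℕ) :
    (T.chi T.root).encard ≤ (T.level (n + 1)).encard := by
  induction n with
  | zero => rw [level_one]
  | succ n ih =>
    have hsub : T.level (n + 1) ⊆ T.par '' T.level (n + 2) :=
      level_subset_image_par_level_succ fun v hv ↦ h v (ne_root_of_dep_eq_add_one hv)
    exact ih.trans ((Set.encard_le_encard hsub).trans (Set.encard_image_le _ _))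

lemma sum_mul_le_norm_sq_of_le_encard_level (f : L2 V) {m : ℕ → ℕ} {φ : ℕ → ℝ}
    (hm : ∀ n, m n ≤ (T.level n).encard) (hφ : ∀ v, φ (T.dep v) ≤ ‖f v‖ ^ 2) (s : Finset ℕ) :
    ∑ n ∈ s, m n * φ n ≤ ‖f‖ ^ 2 := by
  classical
  have hsub (n : ℕ) : ∃ t : Finset V, (∀ v ∈ t, T.dep v = n) ∧ t.card = m n := by
    obtain ⟨t, ht, hcard⟩ := Set.exists_subset_encard_eq (hm n)
    lift t to Finset V using Set.finite_of_encard_eq_coe hcard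
    exact ⟨t, ht, by simpa using hcard⟩
  choose t hdep hcard using hsub
  have hdisj : (s : Set ℕ).PairwiseDisjoint t := fun i _ j _ hij ↦
    Finset.disjoint_left.2 fun v hi hj ↦ hij ((hdep i v hi).symm.trans (hdep j v hj))
  calc ∑ n ∈ s, m n * φ n = ∑ n ∈ s, ∑ v ∈ t n, φ (T.dep v) := by
        refine Finset.sum_congr rfl fun n _ ↦ ?_
        rw [Finset.sum_congr rfl fun v hv ↦ congrArg φ (hdep n v hv), Finset.sum_const, hcard,
          nsmul_eq_mul]
    _ = ∑ v ∈ s.biUnion t, φ (T.dep v) := (Finset.sum_biUnion hdisj).symm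
    _ ≤ ∑ v ∈ s.biUnion t, ‖f v‖ ^ 2 := Finset.sum_le_sum fun v _ ↦ hφ v
    _ ≤ ‖f‖ ^ 2 := L2.sum_norm_sq_le_norm_sq f _

end Level

section CesaroMap

@[simp]
lemma cesaro_root (f : V → ℂ) : T.cesaro f T.root = f T.root := by simp [cesaro]

lemma dep_add_one_mul_cesaro (f : V → ℂ) (v : V) :
    (T.dep v + 1) * T.cesaro f v = T.dep v * T.cesaro f (T.par v) + f v := by
  rcases eq_or_ne v T.root with rfl | hv
  · simp
  · have hdep := dep_eq_dep_par_add_one hv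
    have hself : (T.dep v + 1 : ℂ) ≠ 0 := Nat.cast_add_one_ne_zero _
    have hpar : (T.dep v : ℂ) * (T.dep (T.par v) + 1 : ℂ)⁻¹ = 1 := by
      rw [hdep, Nat.cast_succ, mul_inv_cancel₀ (Nat.cast_add_one_ne_zero _)]
    simp only [cesaro]
    rw [mul_inv_cancel_left₀ hself, ← mul_assoc, hpar, one_mul, Finset.sum_range_succ', hdep]
    rfl

lemma cesaro_single_root [DecidableEq V] (v : V) :
    T.cesaro (Pi.single T.root 1) v = (T.dep v + 1 : ℂ)⁻¹ := by
  induction h : T.dep v generalizing v with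
  | zero => simp [dep_eq_zero_iff.1 h]
  | succ n ih =>
    have hv := ne_root_of_dep_eq_add_one h
    have hn : (n + 1 : ℂ) ≠ 0 := Nat.cast_add_one_ne_zero _
    have hrec := dep_add_one_mul_cesaro (T := T) (Pi.single T.root 1) v
    rw [ih (T.par v) (dep_par_of_dep_eq_add_one h), Pi.single_eq_of_ne hv, h, add_zero,
      Nat.cast_succ, mul_inv_cancel₀ hn] at hrec
    exact_mod_cast eq_inv_of_mul_eq_one_right hrec

theorem sum_norm_cesaro_sq_le (hpar : Set.InjOn T.par {v | T.par v ≠ T.root}) {f : V → ℂ}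
    (hf : f T.root = 0) {s : Finset V} (hs : ∀ v ∈ s, T.par v ∈ s) :
    ∑ v ∈ s, ‖T.cesaro f v‖ ^ 2 ≤ 4 * ∑ v ∈ s, ‖f v‖ ^ 2 := by
  classical
  set h : V → ℝ := fun v ↦ (T.dep v + 1) * ‖T.cesaro f v‖ ^ 2
  have hh_root : h T.root = 0 := by simp [h, hf]
  have hh_par (v : V) : T.dep v * ‖T.cesaro f (T.par v)‖ ^ 2 = h (T.par v) := by
    rcases eq_or_ne v T.root with rfl | hv
    · simp [T.par_root, hh_root]
    · simp [h, dep_eq_dep_par_add_one hv]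
  have hpointwise (v : V) :
      ‖T.cesaro f v‖ ^ 2 + 2 * h v ≤ 2 * h (T.par v) + 4 * ‖f v‖ ^ 2 := by
    have hf_eq : f v =
        (T.dep v + 1 : ℝ) • T.cesaro f v - (T.dep v : ℝ) • T.cesaro f (T.par v) := by
      rw [Complex.real_smul, Complex.real_smul]
      push_cast
      rw [dep_add_one_mul_cesaro, add_sub_cancel_left]
    rw [← hh_par, hf_eq]
    exact norm_sq_add_le_four_mul_norm_smul_sub_smul_sq (Nat.cast_nonneg _) _ _
  have hsum_par : ∑ v ∈ s, h (T.par v) ≤ ∑ v ∈ s, h v := by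
    have hne (v : V) (_ : v ∈ s) (hv : h (T.par v) ≠ 0) : T.par v ≠ T.root :=
      ne_of_apply_ne h (hh_root ▸ hv)
    calc ∑ v ∈ s, h (T.par v) = ∑ v ∈ s with T.par v ≠ T.root, h (T.par v) :=
          (Finset.sum_filter_of_ne hne).symm
      _ = ∑ w ∈ (s.filter fun v ↦ T.par v ≠ T.root).image T.par, h w :=
          (Finset.sum_image (hpar.mono fun v hv ↦ (Finset.mem_filter.1 hv).2)).symm
      _ ≤ ∑ v ∈ s, h v := by
          refine Finset.sum_le_sum_of_subset_of_nonneg ?_ fun v _ _ ↦ by positivity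
          exact Finset.image_subset_iff.2 fun v hv ↦ hs v (Finset.mem_filter.1 hv).1
  have hsum := Finset.sum_le_sum fun v (_ : v ∈ s) ↦ hpointwise v
  simp only [Finset.sum_add_distrib, ← Finset.mul_sum] at hsum
  linarith

lemma inv_le_norm_cesaro_sq_of_two_mul_sub_cesaro [DecidableEq V] {f : V → ℂ}
    (hf : ∀ v, 2 * f v - T.cesaro f v = (Pi.single T.root 1 : V → ℂ) v) (v : V) :
    (2 * (T.dep v : ℝ) + 1)⁻¹ ≤ ‖T.cesaro f v‖ ^ 2 := by
  induction h : T.dep v generalizing v with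
  | zero =>
    obtain rfl := dep_eq_zero_iff.1 h
    have hroot : f T.root = 1 := by
      have := hf T.root
      rw [cesaro_root, Pi.single_eq_same] at this
      linear_combination this
    simp [hroot]
  | succ n ih =>
    have hv := ne_root_of_dep_eq_add_one h
    have hrec : (2 * n + 3 : ℂ) * T.cesaro f v = (2 * n + 2 : ℂ) * T.cesaro f (T.par v) := by
      have hcesaro := dep_add_one_mul_cesaro (T := T) f v
      have hfv := hf v
      rw [Pi.single_eq_of_ne hv] at hfv
      rw [h] at hcesaro
      push_cast at hcesaro
      linear_combination 2 * hcesaro + hfv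
    have hnorm : (2 * n + 3) * ‖T.cesaro f v‖ = (2 * n + 2) * ‖T.cesaro f (T.par v)‖ := by
      have := congrArg norm hrec
      rw [norm_mul, norm_mul] at this
      exact_mod_cast this
    have hpar := ih (T.par v) (dep_par_of_dep_eq_add_one h)
    rw [inv_le_iff_one_le_mul₀ (by positivity)] at hpar ⊢
    push_cast
    have hsq : (2 * n + 3) ^ 2 * ‖T.cesaro f v‖ ^ 2 =
        (2 * n + 2) ^ 2 * ‖T.cesaro f (T.par v)‖ ^ 2 := by
      rw [← mul_pow, ← mul_pow, hnorm]
    nlinarith [sq_nonneg ‖T.cesaro f (T.par v)‖]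

end CesaroMap

section CesaroOperator

open scoped Real

variable {C : L2 V →L[ℂ] L2 V}

lemma norm_apply_le_two_mul_norm (hpar : Set.InjOn T.par {v | T.par v ≠ T.root})
    (hC : ∀ (f : L2 V) (v : V), C f v = T.cesaro f v) {f : L2 V} (hf : f T.root = 0) :
    ‖C f‖ ≤ 2 * ‖f‖ := by
  refine L2.norm_le_of_forall_sum_norm_sq_le (by positivity) fun s ↦ ?_
  obtain ⟨t, hst, ht⟩ := T.exists_finset_superset_par_closed s
  calc ∑ v ∈ s, ‖C f v‖ ^ 2 ≤ ∑ v ∈ t, ‖C f v‖ ^ 2 :=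
        Finset.sum_le_sum_of_subset_of_nonneg hst fun _ _ _ ↦ by positivity
    _ = ∑ v ∈ t, ‖T.cesaro f v‖ ^ 2 := by simp only [hC]
    _ ≤ 4 * ∑ v ∈ t, ‖f v‖ ^ 2 := sum_norm_cesaro_sq_le hpar hf ht
    _ ≤ 4 * ‖f‖ ^ 2 := by gcongr; exact L2.sum_norm_sq_le_norm_sq f t
    _ = (2 * ‖f‖) ^ 2 := by ring

lemma norm_le_two_of_mem_spectrum (hpar : Set.InjOn T.par {v | T.par v ≠ T.root})
    (hC : ∀ (f : L2 V) (v : V), C f v = T.cesaro f v) {z : ℂ} (hz : z ∈ spectrum ℂ C) :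
    ‖z‖ ≤ 2 := by
  have hroot (f : L2 V) : C f T.root = f T.root := by rw [hC, cesaro_root]
  rcases eq_or_ne z 1 with rfl | hz1
  · norm_num
  · exact norm_le_of_mem_spectrum_of_norm_apply_le_on (s := {f : L2 V | f T.root = 0}) zero_le_two
      (fun f hf ↦ (hroot f).trans hf) (fun f hf ↦ norm_apply_le_two_mul_norm hpar hC hf)
      (fun f ↦ by simp [hroot]) hz hz1

lemma two_mem_spectrum (hlevel : ∀ n, (T.level n).Nonempty)
    (hC : ∀ (f : L2 V) (v : V), C f v = T.cesaro f v) : 2 ∈ spectrum ℂ C := by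
  classical
  rw [spectrum.mem_iff]
  rintro ⟨u, hu⟩
  set f : L2 V := (↑u⁻¹ : L2 V →L[ℂ] L2 V) (lp.single 2 T.root 1)
  have hf : algebraMap ℂ (L2 V →L[ℂ] L2 V) 2 f - C f = lp.single 2 T.root 1 := by
    rw [← sub_apply, ← hu]
    exact congrArg (· (lp.single 2 T.root 1)) u.mul_inv
  have hresolvent (v : V) : 2 * f v - T.cesaro f v = (Pi.single T.root 1 : V → ℂ) v := by
    rw [← hC]
    exact congrArg (fun g : L2 V ↦ g v) hf
  have hbound : ∀ s : Finset ℕ, ∑ n ∈ s, (2 * (n : ℝ) + 1)⁻¹ ≤ ‖C f‖ ^ 2 := by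
    simpa using sum_mul_le_norm_sq_of_le_encard_level (C f) (m := 1)
      (fun n ↦ by simpa using hlevel n)
      fun v ↦ (hC f v).symm ▸ inv_le_norm_cesaro_sq_of_two_mul_sub_cesaro hresolvent v
  have hsummable : Summable fun n : ℕ ↦ (2 * (n : ℝ) + 1)⁻¹ :=
    summable_of_sum_le (fun n ↦ by positivity) hbound
  refine (summable_nat_add_iff 1).not.2 Real.not_summable_one_div_natCast
    ((hsummable.mul_left 2).of_nonneg_of_le (fun n ↦ by positivity) fun n ↦ ?_)
  rw [← div_eq_mul_inv, div_le_div_iff₀ (by positivity) (by positivity)]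
  push_cast
  linarith

theorem spectralRadius_eq_two (hlevel : ∀ n, (T.level n).Nonempty)
    (hpar : Set.InjOn T.par {v | T.par v ≠ T.root})
    (hC : ∀ (f : L2 V) (v : V), C f v = T.cesaro f v) : spectralRadius ℂ C = 2 := by
  refine le_antisymm (iSup₂_le fun z hz ↦ ?_) ?_
  · exact_mod_cast show ‖z‖₊ ≤ 2 from norm_le_two_of_mem_spectrum hpar hC hz
  · calc (2 : ℝ≥0∞) = ‖(2 : ℂ)‖₊ := by simp
      _ ≤ spectralRadius ℂ C :=
        le_iSup₂ (f := fun (z : ℂ) (_ : z ∈ spectrum ℂ C) ↦ (‖z‖₊ : ℝ≥0∞)) 2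
          (two_mem_spectrum hlevel hC)

lemma one_add_mul_le_norm_sq {k : ℕ} (hroot : k ≤ (T.chi T.root).encard)
    (hchi : ∀ v, v ≠ T.root → (T.chi v).Nonempty)
    (hC : ∀ (f : L2 V) (v : V), C f v = T.cesaro f v) :
    1 + k * (π ^ 2 / 6 - 1) ≤ ‖C‖ ^ 2 := by
  classical
  set δ : L2 V := lp.single 2 T.root 1
  have hδ (v : V) : ((T.dep v + 1 : ℝ) ^ 2)⁻¹ ≤ ‖C δ v‖ ^ 2 := by
    have hnorm : ‖(T.dep v + 1 : ℂ)‖ = T.dep v + 1 := mod_cast Complex.norm_natCast (T.dep v + 1)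
    rw [hC, lp.coeFn_single, cesaro_single_root, norm_inv, hnorm, inv_pow]
  have hcard (n : ℕ) : ((if n = 0 then 1 else k : ℕ) : ℕ∞) ≤ (T.level n).encard := by
    cases n with
    | zero => simp [level_zero]
    | succ n => simpa using hroot.trans (encard_chi_root_le_encard_level hchi n)
  have hsum : HasSum (fun n : ℕ ↦ ((if n = 0 then 1 else k : ℕ) : ℝ) * ((n + 1 : ℝ) ^ 2)⁻¹)
      (1 + k * (π ^ 2 / 6 - 1)) := by
    have hzeta : HasSum (fun n : ℕ ↦ ((n + 1 : ℝ) ^ 2)⁻¹) (π ^ 2 / 6) := by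
      simpa using (hasSum_nat_add_iff' 1).2 hasSum_zeta_two
    convert! (hzeta.mul_left (k : ℝ)).add (hasSum_ite_eq 0 (1 - k : ℝ)) using 1
    · ext n
      cases n <;> simp
    · ring
  calc 1 + k * (π ^ 2 / 6 - 1) ≤ ‖C δ‖ ^ 2 :=
        hasSum_le_of_sum_le hsum (sum_mul_le_norm_sq_of_le_encard_level (C δ) hcard hδ)
    _ ≤ ‖C‖ ^ 2 := by
        have hle : ‖C δ‖ ≤ ‖C‖ := C.unit_le_opNorm δ (by simp [δ, lp.norm_single])
        gcongr

theorem two_lt_norm (hroot : 5 ≤ (T.chi T.root).encard)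
    (hchi : ∀ v, v ≠ T.root → (T.chi v).Nonempty)
    (hC : ∀ (f : L2 V) (v : V), C f v = T.cesaro f v) : 2 < ‖C‖ := by
  have hnorm : 1 + 5 * (π ^ 2 / 6 - 1) ≤ ‖C‖ ^ 2 := one_add_mul_le_norm_sq (k := 5) hroot hchi hC
  refine lt_of_pow_lt_pow_left₀ 2 (norm_nonneg C) ?_
  nlinarith [Real.pi_gt_d2]

end CesaroOperator

end TreeData

/-- For `k ≥ 5`, the bounded Cesàro operator of the tree `T_k` (root with `k`
children, all other vertices with a single child) has norm strictly greater than `2` while its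
spectral radius equals `2`; in particular it is not normaloid. -/
theorem cesaro_not_normaloid {V : Type} [Countable V] [Infinite V]
    (T : TreeData V) (k : ℕ) (hk : 5 ≤ k)
    (hroot : (T.chi T.root).encard = k)
    (hother : ∀ v : V, v ≠ T.root → (T.chi v).encard = 1)
    (C : L2 V →L[ℂ] L2 V) (hC : ∀ (f : L2 V) (v : V), C f v = T.cesaro ⇑f v) :
    2 < ‖C‖ ∧ spectralRadius ℂ C = 2 := by
  have hchi (v : V) (hv : v ≠ T.root) : (T.chi v).Nonempty :=
    Set.encard_ne_zero.1 (by simp [hother v hv])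
  have hroot5 : 5 ≤ (T.chi T.root).encard := hroot ▸ mod_cast hk
  have hchi_root : (T.chi T.root).Nonempty :=
    Set.encard_ne_zero.1 ((by norm_num : (0 : ℕ∞) < 5).trans_le hroot5).ne'
  have hpar : Set.InjOn T.par {v | T.par v ≠ T.root} := by
    intro v hv w hw hvw
    have hne {u : V} (hu : T.par u ≠ T.root) : u ≠ T.root := fun h ↦ hu (h ▸ T.par_root)
    exact Set.encard_le_one_iff.1 (hother _ hv).le v w ⟨hne hv, rfl⟩ ⟨hne hw, hvw.symm⟩
  have hlevel := TreeData.level_nonempty fun v ↦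
    (eq_or_ne v T.root).elim (fun hv ↦ hv ▸ hchi_root) (hchi v)
  exact ⟨TreeData.two_lt_norm hroot5 hchi hC, TreeData.spectralRadius_eq_two hlevel hpar hC⟩
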